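/- arXiv:2308.01449 — 5 statements merged into one kernel-verified Lean document; each statement's English description precedes it below -/
import Mathlib

section
/- Let α > β > 0 and σ ≥ 0. There exists a constant C > 0 (depending only on α, β, σ) such that for every t > 0 and every ξ ∈ ℝ one has (t^{1/α}·|ξ|)^{2σ} · e^{−(|ξ|^α − |ξ|^β)·t} ≤ C·( t^{2σ/α}·e^{t} + t^{2σ/α} + 1 ). -/
/-!
Write `y = |ξ|` and split at `R = 2 ^ (1 / (α - β))`, the point beyond which `y ^ α ≥ 2 * y ^ β`.
For `y ≤ R` the weight is at most `t ^ (2σ/α) * R ^ (2σ)`, while `y ^ β - y ^ α ≤ 1` bounds the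
exponential by `exp t`. For `y > R` the exponent is at most `-s / 2` with `s = t * y ^ α`, and the
weight equals `s ^ (2σ/α)`, so the product is bounded by a constant (`rpow_mul_exp_neg_half_le`).
-/

/-- Exponential decay beats power growth, with an explicit constant. -/
lemma rpow_mul_exp_neg_half_le {p s : ℝ} (hp : 0 ≤ p) (hs : 0 ≤ s) :
    s ^ p * Real.exp (-(s / 2)) ≤ (2 * (p + 1)) ^ p := by
  -- Raise `u ≤ exp u` with `u = s / (2 * (p + 1))` to the power `p`; then `u * p ≤ s / 2`.
  have h1 : s / (2 * (p + 1)) ≤ Real.exp (s / (2 * (p + 1))) := by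
    linarith [Real.add_one_le_exp (s / (2 * (p + 1)))]
  have h2 : (s / (2 * (p + 1))) ^ p ≤ Real.exp (s / 2) := by
    calc (s / (2 * (p + 1))) ^ p ≤ Real.exp (s / (2 * (p + 1))) ^ p :=
          Real.rpow_le_rpow (by positivity) h1 hp
      _ = Real.exp (s / (2 * (p + 1)) * p) := (Real.exp_mul _ _).symm
      _ ≤ Real.exp (s / 2) := by
          apply Real.exp_le_exp.mpr
          rw [div_mul_eq_mul_div, div_le_div_iff₀ (by positivity) (by norm_num)]
          nlinarith
  rw [Real.div_rpow hs (by positivity), div_le_iff₀ (by positivity)] at h2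
  rw [Real.exp_neg, ← div_eq_mul_inv, div_le_iff₀ (Real.exp_pos _)]
  linarith

lemma rpow_sub_rpow_le_one {α β y : ℝ} (hβ : 0 < β) (hαβ : β < α) (hy : 0 ≤ y) :
    y ^ β - y ^ α ≤ 1 := by
  rcases le_total y 1 with h | h
  · linarith [Real.rpow_le_one hy h hβ.le, Real.rpow_nonneg hy α]
  · linarith [Real.rpow_le_rpow_of_exponent_le h hαβ.le]

lemma two_mul_rpow_le_rpow {α β y : ℝ} (hαβ : β < α) (hy : (2 : ℝ) ^ (1 / (α - β)) ≤ y) :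
    2 * y ^ β ≤ y ^ α := by
  have hy0 : 0 < y := lt_of_lt_of_le (by positivity) hy
  have hd : 0 < α - β := sub_pos.mpr hαβ
  have h := Real.rpow_le_rpow (by positivity) hy hd.le
  rw [← Real.rpow_mul (by norm_num), one_div_mul_cancel hd.ne', Real.rpow_one] at h
  calc 2 * y ^ β ≤ y ^ (α - β) * y ^ β := by gcongr
    _ = y ^ α := by rw [← Real.rpow_add hy0, sub_add_cancel]

/-- Lemma «Key-Lemma»: for `α > β > 0`, `σ ≥ 0`, there is a constant `C > 0` such that
for all `t > 0` and `ξ ∈ ℝ`,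
`(t^{1/α}·|ξ|)^{2σ} · exp(−(|ξ|^α − |ξ|^β)t) ≤ C·(t^{2σ/α} e^t + t^{2σ/α} + 1)`. -/
theorem kernel_fourier_weighted_sup_bound
    (α β σ : ℝ) (hβ : 0 < β) (hαβ : β < α) (hσ : 0 ≤ σ) :
    ∃ C > 0, ∀ t : ℝ, 0 < t → ∀ ξ : ℝ,
      (t ^ (1 / α) * |ξ|) ^ (2 * σ) * Real.exp (-(|ξ| ^ α - |ξ| ^ β) * t) ≤
        C * (t ^ (2 * σ / α) * Real.exp t + t ^ (2 * σ / α) + 1) := by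
  have hα : 0 < α := hβ.trans hαβ
  have hp : 0 ≤ 2 * σ / α := by positivity
  set R : ℝ := 2 ^ (1 / (α - β)) with hR
  set A : ℝ := R ^ (2 * σ) with hA
  set B : ℝ := (2 * (2 * σ / α + 1)) ^ (2 * σ / α) with hB
  have hA0 : 0 < A := by positivity
  have hB0 : 0 < B := by positivity
  refine ⟨A + B, by positivity, fun t ht ξ => ?_⟩
  have hy : 0 ≤ |ξ| := abs_nonneg ξ
  generalize |ξ| = y at hy ⊢
  have hT : 0 < t ^ (2 * σ / α) := by positivity
  have hw : (t ^ (1 / α) * y) ^ (2 * σ) = t ^ (2 * σ / α) * y ^ (2 * σ) := by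
    rw [Real.mul_rpow (by positivity) hy, ← Real.rpow_mul ht.le]
    congr 2
    ring
  rw [hw]
  have hE := Real.exp_pos t
  have hTE := mul_pos hT hE
  rcases le_total y R with h | h
  · calc t ^ (2 * σ / α) * y ^ (2 * σ) * Real.exp (-(y ^ α - y ^ β) * t)
        ≤ t ^ (2 * σ / α) * A * Real.exp t := by
          have h1 : y ^ (2 * σ) ≤ A := Real.rpow_le_rpow hy h (by positivity)
          have h2 : -(y ^ α - y ^ β) * t ≤ t := by
            nlinarith [rpow_sub_rpow_le_one hβ hαβ hy]
          gcongr
      _ ≤ _ := by nlinarith [mul_pos hA0 hT, mul_pos hB0 hT, mul_pos hB0 hTE]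
  · have hs : (t * y ^ α) ^ (2 * σ / α) = t ^ (2 * σ / α) * y ^ (2 * σ) := by
      rw [Real.mul_rpow ht.le (by positivity), ← Real.rpow_mul hy, mul_div_cancel₀ _ hα.ne']
    calc t ^ (2 * σ / α) * y ^ (2 * σ) * Real.exp (-(y ^ α - y ^ β) * t)
        ≤ (t * y ^ α) ^ (2 * σ / α) * Real.exp (-(t * y ^ α / 2)) := by
          rw [hs]
          have h2 : -(y ^ α - y ^ β) * t ≤ -(t * y ^ α / 2) := by
            nlinarith [two_mul_rpow_le_rpow hαβ h]
          gcongr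
      _ ≤ B := rpow_mul_exp_neg_half_le hp (by positivity)
      _ ≤ _ := by
          nlinarith [mul_pos hA0 hT, mul_pos hB0 hT, mul_pos hB0 hTE, mul_pos hA0 hTE]
end

section
/- Let α > β > 0 and s₁ ≥ 0. There exist constants C > 0 and η₀ > 0 (depending on s₁ and α) such that for every t > 0 and every ξ ∈ ℝ one has (1 + ξ²)^{s₁/2} · e^{−(|ξ|^α − |ξ|^β)·t} ≤ C · e^{η₀·t} · t^{−s₁/α}. -/
open Real

/-!
Write `x = |ξ|` and `y = 1 + x ^ α`. Because `β < α`, the growing term is absorbed: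
`x ^ β ≤ x ^ α / 2 + M` for a constant `M` (`rpow_le_half_rpow_add`), which costs only a factor
`exp (M * t)`. Moreover `(1 + x ^ 2) ^ (s₁ / 2)` is at most a constant times `y ^ p`,
`p = s₁ / α` (`one_add_sq_rpow_le`). What remains is `(y * t) ^ p * exp (-(y * t) / 2)`, which is
bounded since an exponential dominates every power (`rpow_le_const_mul_exp_half`).
-/

lemma rpow_le_half_rpow_add {α β x : ℝ} (hβ : 0 < β) (hαβ : β < α) (hx : 0 ≤ x) :
    x ^ β ≤ x ^ α / 2 + ((2 : ℝ) ^ (1 / (α - β))) ^ β := by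
  have hd : 0 < α - β := sub_pos.2 hαβ
  have hR : 0 < (2 : ℝ) ^ (1 / (α - β)) := by positivity
  -- the threshold is the point where `x ^ (α - β) = 2`
  rcases le_total x ((2 : ℝ) ^ (1 / (α - β))) with h | h
  · have h1 := rpow_le_rpow hx h hβ.le
    have h2 : 0 ≤ x ^ α := by positivity
    linarith
  · have hx0 : 0 < x := hR.trans_le h
    have h1 : 2 ≤ x ^ (α - β) := by
      have := rpow_le_rpow hR.le h hd.le
      rwa [← rpow_mul (by norm_num), one_div_mul_cancel hd.ne', rpow_one] at this
    have h2 : x ^ α = x ^ (α - β) * x ^ β := by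
      rw [← rpow_add hx0, sub_add_cancel]
    have h3 : 0 < x ^ β := by positivity
    have h4 : 0 < ((2 : ℝ) ^ (1 / (α - β))) ^ β := by positivity
    nlinarith

lemma one_add_sq_rpow_le {α s x : ℝ} (hα : 0 < α) (hs : 0 ≤ s) (hx : 0 ≤ x) :
    (1 + x ^ 2) ^ (s / 2) ≤ 2 ^ (s / 2) * (1 + x ^ α) ^ (s / α) := by
  have hxα : 0 ≤ x ^ α := by positivity
  rcases le_total x 1 with h | h
  · have h1 : (1 + x ^ 2) ^ (s / 2) ≤ 2 ^ (s / 2) :=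
      rpow_le_rpow (by positivity) (by nlinarith) (by positivity)
    have h2 : 1 ≤ (1 + x ^ α) ^ (s / α) := one_le_rpow (by linarith) (by positivity)
    exact h1.trans (le_mul_of_one_le_right (by positivity) h2)
  · calc (1 + x ^ 2) ^ (s / 2) ≤ (2 * x ^ 2) ^ (s / 2) :=
          rpow_le_rpow (by positivity) (by nlinarith) (by positivity)
      _ = 2 ^ (s / 2) * (x ^ α) ^ (s / α) := by
          rw [mul_rpow (by norm_num) (by positivity), ← rpow_natCast x 2, ← rpow_mul hx,
            ← rpow_mul hx]
          congr 2
          push_cast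
          field_simp
      _ ≤ _ := by gcongr; linarith

lemma rpow_le_const_mul_exp_half {p u : ℝ} (hp : 0 ≤ p) (hu : 0 ≤ u) :
    u ^ p ≤ (2 * (p + 1)) ^ p * exp (u / 2) := by
  -- `v ≤ exp v` at `v = u / (2 * (p + 1))`; using `p + 1` instead of `p` covers `p = 0`
  have hq : 0 < 2 * (p + 1) := by positivity
  have h1 : u ≤ 2 * (p + 1) * exp (u / (2 * (p + 1))) := by
    rw [← div_le_iff₀' hq]
    linarith [add_one_le_exp (u / (2 * (p + 1)))]
  calc u ^ p ≤ (2 * (p + 1) * exp (u / (2 * (p + 1)))) ^ p := rpow_le_rpow hu h1 hp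
    _ = (2 * (p + 1)) ^ p * exp (u / (2 * (p + 1)) * p) := by
        rw [mul_rpow hq.le (exp_pos _).le, ← exp_mul]
    _ ≤ _ := by
        gcongr
        rw [div_mul_eq_mul_div, div_le_div_iff₀ hq (by norm_num)]
        nlinarith

/-- Fourier multiplier bound underlying the smoothing estimate of Lemma «Lem-Ker-1»:
for `α > β > 0` and `s₁ ≥ 0` there are `C, η₀ > 0` such that for all `t > 0` and `ξ ∈ ℝ`,
`(1+ξ²)^{s₁/2} · exp(−(|ξ|^α − |ξ|^β)t) ≤ C e^{η₀ t} t^{−s₁/α}`. -/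
theorem kernel_fourier_smoothing_bound
    (α β s₁ : ℝ) (hβ : 0 < β) (hαβ : β < α) (hs₁ : 0 ≤ s₁) :
    ∃ C > 0, ∃ η₀ > 0, ∀ t : ℝ, 0 < t → ∀ ξ : ℝ,
      (1 + ξ ^ 2) ^ (s₁ / 2) * Real.exp (-(|ξ| ^ α - |ξ| ^ β) * t) ≤
        C * Real.exp (η₀ * t) * t ^ (-(s₁ / α)) := by
  have hα : 0 < α := hβ.trans hαβ
  have hp : 0 ≤ s₁ / α := by positivity
  refine ⟨2 ^ (s₁ / 2) * (2 * (s₁ / α + 1)) ^ (s₁ / α), by positivity,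
    ((2 : ℝ) ^ (1 / (α - β))) ^ β + 1 / 2, by positivity, fun t ht ξ => ?_⟩
  have hA := rpow_le_half_rpow_add hβ hαβ (abs_nonneg ξ)
  have hB := one_add_sq_rpow_le hα hs₁ (abs_nonneg ξ)
  rw [sq_abs] at hB
  set M := ((2 : ℝ) ^ (1 / (α - β))) ^ β
  set p := s₁ / α
  have hy : 0 ≤ 1 + |ξ| ^ α := by positivity
  set y := 1 + |ξ| ^ α with hy_def
  have hD : y ^ p ≤ (2 * (p + 1)) ^ p * exp (y * t / 2) * t ^ (-p) := by
    have h := rpow_le_const_mul_exp_half hp (mul_nonneg hy ht.le)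
    rw [mul_rpow hy ht.le] at h
    rwa [rpow_neg ht.le, ← div_eq_mul_inv, le_div_iff₀ (by positivity)]
  -- the summand `1` of `y` accounts for the `1 / 2` in the growth rate
  have hE : exp (-(|ξ| ^ α - |ξ| ^ β) * t) ≤ exp ((M + 1 / 2) * t - y * t / 2) := by
    apply exp_le_exp.2
    nlinarith
  calc (1 + ξ ^ 2) ^ (s₁ / 2) * exp (-(|ξ| ^ α - |ξ| ^ β) * t)
      ≤ (2 ^ (s₁ / 2) * ((2 * (p + 1)) ^ p * exp (y * t / 2) * t ^ (-p))) *
          exp ((M + 1 / 2) * t - y * t / 2) := by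
        refine mul_le_mul (hB.trans ?_) hE (exp_pos _).le (by positivity)
        gcongr
    _ = _ := by
        rw [exp_sub]
        field_simp
end

section
/- Let s₁ ≤ 0 < s be real numbers. There exists a constant C > 0 such that for all ξ, η ∈ ℝ one has (1+ξ²)^{s/2} ≤ C · (1+ξ²)^{s₁/2} · ( (1+(ξ−η)²)^{(s−s₁)/2} + (1+η²)^{(s−s₁)/2} ). -/
/-!
By the parallelogram-type bound `ξ² ≤ 2 ((ξ - η)² + η²)`, the weight `1 + ξ²` is at most four times
the larger of `1 + (ξ - η)²` and `1 + η²`. Raising this to the positive power `(s - s₁) / 2` and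
multiplying by `(1 + ξ²) ^ (s₁ / 2)` gives the claim with `C = 4 ^ ((s - s₁) / 2)`.
-/

open Real

/-- Quasi-subadditivity of `x ↦ x ^ p`, with a bound that holds for every `p ≥ 0`, convex or
concave: the sum `a + b` is at most twice the larger summand. -/
lemma rpow_le_four_rpow_mul_add {x a b p : ℝ} (hx : 0 ≤ x) (ha : 0 ≤ a) (hb : 0 ≤ b)
    (hp : 0 ≤ p) (h : x ≤ 2 * (a + b)) : x ^ p ≤ 4 ^ p * (a ^ p + b ^ p) := by
  have ha' : 0 ≤ a ^ p := Real.rpow_nonneg ha p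
  have hb' : 0 ≤ b ^ p := Real.rpow_nonneg hb p
  have h4 : (0 : ℝ) ≤ 4 ^ p := by positivity
  rcases le_total a b with hab | hab
  · calc x ^ p ≤ (4 * b) ^ p := Real.rpow_le_rpow hx (by linarith) hp
      _ = 4 ^ p * b ^ p := Real.mul_rpow (by norm_num) hb
      _ ≤ 4 ^ p * (a ^ p + b ^ p) := mul_le_mul_of_nonneg_left (by linarith) h4
  · calc x ^ p ≤ (4 * a) ^ p := Real.rpow_le_rpow hx (by linarith) hp
      _ = 4 ^ p * a ^ p := Real.mul_rpow (by norm_num) ha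
      _ ≤ 4 ^ p * (a ^ p + b ^ p) := mul_le_mul_of_nonneg_left (by linarith) h4

/-- Pointwise Fourier-weight inequality behind the Sobolev product law (Lemma «Lema-tech1»):
for `s₁ ≤ 0 < s` there is `C > 0` such that for all `ξ, η ∈ ℝ`,
`(1+ξ²)^{s/2} ≤ C (1+ξ²)^{s₁/2} ((1+(ξ−η)²)^{(s−s₁)/2} + (1+η²)^{(s−s₁)/2})`. -/
theorem sobolev_weight_product_inequality
    (s s₁ : ℝ) (hs₁ : s₁ ≤ 0) (hs : 0 < s) :
    ∃ C > 0, ∀ ξ η : ℝ,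
      (1 + ξ ^ 2) ^ (s / 2) ≤
        C * (1 + ξ ^ 2) ^ (s₁ / 2) *
          ((1 + (ξ - η) ^ 2) ^ ((s - s₁) / 2) + (1 + η ^ 2) ^ ((s - s₁) / 2)) := by
  refine ⟨4 ^ ((s - s₁) / 2), by positivity, fun ξ η => ?_⟩
  have hX : 0 < 1 + ξ ^ 2 := by positivity
  have key := rpow_le_four_rpow_mul_add (p := (s - s₁) / 2) hX.le
    (by positivity : 0 ≤ 1 + (ξ - η) ^ 2) (by positivity : 0 ≤ 1 + η ^ 2) (by linarith)
    -- the difference of the two sides is `3 + (ξ - 2 * η) ^ 2`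
    (by nlinarith [sq_nonneg (ξ - 2 * η)])
  have hsplit : (1 + ξ ^ 2) ^ (s / 2) = (1 + ξ ^ 2) ^ (s₁ / 2) * (1 + ξ ^ 2) ^ ((s - s₁) / 2) := by
    rw [← Real.rpow_add hX]
    congr 1
    ring
  rw [hsplit, mul_comm (4 ^ ((s - s₁) / 2)), mul_assoc]
  exact mul_le_mul_of_nonneg_left key (Real.rpow_nonneg hX.le _)
end

section
/- Let α > β ≥ 1 with α > 2, let m(ξ) = |ξ| or m(ξ) = −|ξ|², set f(ξ) = i·m(ξ)·ξ + (|ξ|^α − |ξ|^β) and K_{α,β}(t,x) = ∫_ℝ e^{2πi x ξ} e^{−f(ξ)t} dξ. Then for every p with 1 ≤ p ≤ ∞ there exist constants C > 0 and η₁ > 0, depending on α, β and p, such that for all t > 0 the L^p norm of x ↦ K_{α,β}(t,x) satisfies ‖K_{α,β}(t,·)‖_{L^p(ℝ)} ≤ C · e^{η₁ t} / t^{1/α}. -/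
open Real MeasureTheory
open scoped ENNReal

/-!
The symbol satisfies `f (-ξ) = conj (f ξ)`, so with `g = exp (-t f)` on
`(0, ∞)` the kernel equals `2 Re ∫_{ξ > 0} e^{2πixξ} g(ξ) dξ`, and everything happens on the
half-line, where `f ξ = i c ξ ^ k + ξ ^ α - ξ ^ β` with `(c, k) = (1, 2)` or `(-1, 3)`.

The `L^p` bound follows for all `p` at once from the pointwise bound
`|K(t, x)| ≤ C e^{ηt} t^{-1/α} / (1 + x²)` (`kernel_pointwise_bound`). For the factor `1` it is
enough to integrate `|g|`. For the factor `x²` one integrates by parts twice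
(`fourier_half_line`). The boundary term `g(0) / (2πix)` is purely imaginary and is cancelled by its
conjugate, so `|K|` is controlled by `x⁻²` times `|g'(0⁺)| + ∫ |g''|` (`norm_fourier_le`). The
boundary term `g'(0⁺)` is nonzero only if `β = 1`, and it is always `O(t)`.

Since `g' = -t f' g` and `g'' = (-t f'' + t² f'²) g`, everything reduces to bounding the integrals
of `t ^ a ξ ^ s e^{-(ξ^α - ξ^β) t}`. As `ξ ^ β ≤ ξ ^ α / 2 + M`, such an integral is at most a
constant times `e^{Mt} t^{a - (s+1)/α}`, which is `O(e^{(M+1)t} t^{-1/α})` as soon as `s ≤ a α`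
(`Tame.monomial`). The worst dispersive exponent is `s = 4`, `a = 2`, from `t² f'²` when `k = 3`;
this is where `α ≥ 2` is needed.
-/

open Set Filter Topology

/-! ### Weighted exponential integrals on the half-line -/

/-- The constant comes from `t / r ≤ e^{t / r}`; it is `1` for `r = 0`, as `0 ^ 0 = 1`. -/
lemma rpow_le_mul_exp {r t : ℝ} (hr : 0 ≤ r) (ht : 0 < t) : t ^ r ≤ r ^ r * exp t := by
  rcases hr.eq_or_lt with rfl | hr
  · simpa using ht.le
  · have h1 : t / r ≤ exp (t / r) := by linarith [add_one_le_exp (t / r)]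
    have h2 : (t / r) ^ r ≤ exp (t / r) ^ r := rpow_le_rpow (by positivity) h1 hr.le
    rw [← exp_mul, div_mul_cancel₀ _ hr.ne', div_rpow ht.le hr.le, div_le_iff₀ (by positivity)] at h2
    linarith

/-- The constant `M = 2 ^ (β / (α - β))` bounds `ξ ^ β` wherever `ξ ^ (α - β) ≤ 2`. -/
lemma exists_rpow_le_half {α β : ℝ} (hβ : 0 ≤ β) (hαβ : β < α) :
    ∃ M : ℝ, 0 ≤ M ∧ ∀ ξ : ℝ, 0 < ξ → ξ ^ β ≤ ξ ^ α / 2 + M := by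
  have hd : 0 < α - β := by linarith
  refine ⟨(2 : ℝ) ^ (β / (α - β)), by positivity, fun ξ hξ => ?_⟩
  have hsplit : ξ ^ α = ξ ^ β * ξ ^ (α - β) := by rw [← rpow_add hξ]; ring_nf
  rcases le_total 2 (ξ ^ (α - β)) with h | h
  · have : ξ ^ β * 2 ≤ ξ ^ β * ξ ^ (α - β) := by gcongr
    have : (0 : ℝ) ≤ (2 : ℝ) ^ (β / (α - β)) := by positivity
    rw [hsplit]; linarith
  · have h2 : (ξ ^ (α - β)) ^ (β / (α - β)) ≤ 2 ^ (β / (α - β)) :=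
      rpow_le_rpow (by positivity) h (by positivity)
    rw [← rpow_mul hξ.le, mul_div_cancel₀ _ hd.ne'] at h2
    have : 0 ≤ ξ ^ α := by positivity
    linarith

/-- The amplitude `h t ξ` is *tame* if its integral over `ξ > 0` against the modulus
`e^{-(ξ^α - ξ^β) t}` of the multiplier exists and is `O(e^{ηt} / t^{1/α})`, uniformly in `t > 0`. -/
def Tame (α β η : ℝ) (h : ℝ → ℝ → ℝ) : Prop :=
  ∃ C : ℝ, 0 ≤ C ∧ ∀ t : ℝ, 0 < t →
    IntegrableOn (fun ξ => h t ξ * exp (-(ξ ^ α - ξ ^ β) * t)) (Ioi 0) ∧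
    ∫ ξ in Ioi 0, h t ξ * exp (-(ξ ^ α - ξ ^ β) * t) ≤ C * (exp (η * t) / t ^ (1 / α))

lemma Tame.add {α β η : ℝ} {h k : ℝ → ℝ → ℝ} (hh : Tame α β η h) (hk : Tame α β η k) :
    Tame α β η (fun t ξ => h t ξ + k t ξ) := by
  obtain ⟨C, hC, H⟩ := hh
  obtain ⟨D, hD, K⟩ := hk
  refine ⟨C + D, by positivity, fun t ht => ?_⟩
  obtain ⟨h1, h2⟩ := H t ht
  obtain ⟨k1, k2⟩ := K t ht
  simp only [add_mul]
  refine ⟨h1.add k1, ?_⟩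
  rw [integral_add h1 k1]
  linarith

lemma Tame.const_mul {α β η : ℝ} {h : ℝ → ℝ → ℝ} {c : ℝ} (hc : 0 ≤ c) (hh : Tame α β η h) :
    Tame α β η (fun t ξ => c * h t ξ) := by
  obtain ⟨C, hC, H⟩ := hh
  refine ⟨c * C, by positivity, fun t ht => ?_⟩
  obtain ⟨h1, h2⟩ := H t ht
  simp only [mul_assoc]
  refine ⟨h1.const_mul c, ?_⟩
  rw [integral_const_mul]
  gcongr

/-- The exponent `a - s / α` of the surplus power of `t` is nonnegative by `hsa`, so that this power
is absorbed by `e^t`. -/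
lemma Tame.monomial {α β M s : ℝ} (hα : 0 < α) 
    (hMle : ∀ ξ : ℝ, 0 < ξ → ξ ^ β ≤ ξ ^ α / 2 + M) {a : ℕ} (hs : -1 < s) (hsa : s ≤ a * α) :
    Tame α β (M + 1) (fun t ξ => t ^ a * ξ ^ s) := by
  have hr : 0 ≤ a - s / α := by
    rw [sub_nonneg, div_le_iff₀ hα]; exact hsa
  set c : ℝ := (1 / 2 : ℝ) ^ (-(s + 1) / α) * (1 / α) * Gamma ((s + 1) / α) with hc
  have hΓ : 0 < Gamma ((s + 1) / α) := Gamma_pos_of_pos (div_pos (by linarith) hα)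
  have hc0 : 0 ≤ c := by positivity
  refine ⟨c * (a - s / α) ^ (a - s / α), by positivity, fun t ht => ?_⟩
  have hle : ∀ ξ ∈ Ioi (0 : ℝ), t ^ a * ξ ^ s * exp (-(ξ ^ α - ξ ^ β) * t) ≤
      t ^ a * exp (M * t) * (ξ ^ s * exp (-(t / 2) * ξ ^ α)) := by
    intro ξ hξ
    have hξ : 0 < ξ := hξ
    have : exp (-(ξ ^ α - ξ ^ β) * t) ≤ exp (M * t) * exp (-(t / 2) * ξ ^ α) := by
      rw [← exp_add, exp_le_exp]
      nlinarith [hMle ξ hξ]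
    calc _ ≤ t ^ a * ξ ^ s * (exp (M * t) * exp (-(t / 2) * ξ ^ α)) := by gcongr
      _ = _ := by ring
  have hI : IntegrableOn (fun ξ : ℝ => t ^ a * exp (M * t) * (ξ ^ s * exp (-(t / 2) * ξ ^ α)))
      (Ioi 0) :=
    (integrableOn_rpow_mul_exp_neg_mul_rpow hs hα (by positivity)).const_mul _
  have hI2 : IntegrableOn (fun ξ => t ^ a * ξ ^ s * exp (-(ξ ^ α - ξ ^ β) * t)) (Ioi 0) := by
    refine hI.mono' (by fun_prop) ?_
    filter_upwards [ae_restrict_mem measurableSet_Ioi] with ξ hξ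
    have hξ' : 0 < ξ := hξ
    rw [norm_of_nonneg (by positivity)]
    exact hle ξ hξ
  refine ⟨hI2, (setIntegral_mono_on hI2 hI measurableSet_Ioi hle).trans ?_⟩
  rw [integral_const_mul, integral_rpow_mul_exp_neg_mul_rpow hα hs (by positivity)]
  have e1 : (t / 2) ^ (-(s + 1) / α) = (1 / 2) ^ (-(s + 1) / α) * (t ^ (- (s / α)) / t ^ (1 / α)) := by
    rw [div_eq_mul_one_div t 2, mul_rpow ht.le (by norm_num), ← rpow_sub ht, mul_comm]
    congr 2; ring
  have e2 : t ^ a * t ^ (-(s / α)) = t ^ (a - s / α) := by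
    rw [← rpow_natCast, ← rpow_add ht]; rfl
  calc t ^ a * exp (M * t) * ((t / 2) ^ (-(s + 1) / α) * (1 / α) * Gamma ((s + 1) / α))
      = c * (t ^ a * t ^ (-(s / α))) * (exp (M * t) / t ^ (1 / α)) := by rw [e1, hc]; ring
    _ ≤ c * ((a - s / α) ^ (a - s / α) * exp t) * (exp (M * t) / t ^ (1 / α)) := by
        rw [e2]; gcongr; exact rpow_le_mul_exp hr ht
    _ = _ := by rw [add_mul, exp_add, one_mul]; ring

/-! ### Fourier integrals of Hermitian functions -/

lemma memLp_inv_one_add_sq {p : ℝ≥0∞} (hp : 1 ≤ p) :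
    MemLp (fun x : ℝ => (1 + x ^ 2)⁻¹) p := by
  have h0 : ∀ x : ℝ, ‖(1 + x ^ 2)⁻¹‖ ≤ 1 := fun x => by
    rw [norm_of_nonneg (by positivity)]
    exact inv_le_one_of_one_le₀ (by nlinarith)
  have hm : AEStronglyMeasurable (fun x : ℝ => (1 + x ^ 2)⁻¹) volume := by fun_prop
  rcases eq_or_ne p ∞ with rfl | hpt
  · exact memLp_top_of_bound hm 1 (Eventually.of_forall h0)
  · have hp0 : p ≠ 0 := (zero_lt_one.trans_le hp).ne'
    rw [← integrable_norm_rpow_iff hm hp0 hpt]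
    refine integrable_inv_one_add_sq.mono'
      (hm.norm.aemeasurable.pow_const _).aestronglyMeasurable (Eventually.of_forall fun x => ?_)
    have h1 : 1 ≤ p.toReal := by
      simpa using ENNReal.toReal_mono hpt hp
    rw [norm_of_nonneg (by positivity)]
    calc _ ≤ ‖(1 + x ^ 2)⁻¹‖ ^ (1 : ℝ) :=
          rpow_le_rpow_of_exponent_ge (norm_pos_iff.2 (by positivity)) (h0 x) h1
      _ = _ := by rw [rpow_one, norm_of_nonneg (by positivity)]

/-- Two integrations by parts on the half-line: `e^{iωξ} g + e^{iωξ} g'' / ω²` is the derivative of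
`e^{iωξ} (-i g / ω + g' / ω²)`. -/
lemma fourier_half_line {g g₁ g₂ : ℝ → ℂ}
    (hg : ∀ ξ ∈ Ioi (0 : ℝ), HasDerivAt g (g₁ ξ) ξ)
    (hg₁ : ∀ ξ ∈ Ioi (0 : ℝ), HasDerivAt g₁ (g₂ ξ) ξ)
    (hc : ContinuousWithinAt g (Ici 0) 0) (hc₁ : ContinuousWithinAt g₁ (Ici 0) 0)
    (hi : IntegrableOn g (Ioi 0)) (hi₁ : IntegrableOn g₁ (Ioi 0)) (hi₂ : IntegrableOn g₂ (Ioi 0))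
    {ω : ℝ} (hω : ω ≠ 0) :
    ∫ ξ in Ioi (0 : ℝ), Complex.exp (Complex.I * ω * ξ) * g ξ =
      Complex.I * (g 0 / ω) - (g₁ 0 +
        ∫ ξ in Ioi (0 : ℝ), Complex.exp (Complex.I * ω * ξ) * g₂ ξ) / (ω : ℂ) ^ 2 := by
  have hωc : (ω : ℂ) ≠ 0 := by exact_mod_cast hω
  have hI := Complex.I_sq
  have hnorm : ∀ ξ : ℝ, ‖Complex.exp (Complex.I * ω * ξ)‖ ≤ 1 := fun ξ => by
    rw [Complex.norm_exp]; simp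
  have hmul : ∀ {h : ℝ → ℂ}, IntegrableOn h (Ioi 0) →
      IntegrableOn (fun ξ : ℝ => Complex.exp (Complex.I * ω * ξ) * h ξ) (Ioi 0) := fun hh =>
    hh.bdd_mul (c := 1) (by fun_prop) (Eventually.of_forall hnorm)
  set G : ℝ → ℂ := fun ξ => Complex.exp (Complex.I * ω * ξ) *
    (-Complex.I * (g ξ / ω) + g₁ ξ / (ω : ℂ) ^ 2) with hG
  have hexp : ∀ ξ : ℝ, HasDerivAt (fun ξ : ℝ => Complex.exp (Complex.I * ω * ξ))
      (Complex.exp (Complex.I * ω * ξ) * (Complex.I * ω)) ξ := fun ξ => by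
    have := ((hasDerivAt_id ξ).ofReal_comp.const_mul (Complex.I * ω)).cexp
    simpa using this
  have hd : ∀ ξ ∈ Ioi (0 : ℝ), HasDerivAt G (Complex.exp (Complex.I * ω * ξ) * g ξ +
      Complex.exp (Complex.I * ω * ξ) * g₂ ξ / (ω : ℂ) ^ 2) ξ := fun ξ hξ => by
    have := (hexp ξ).mul ((((hg ξ hξ).div_const (ω : ℂ)).const_mul (-Complex.I)).add
      ((hg₁ ξ hξ).div_const ((ω : ℂ) ^ 2)))
    refine this.congr_deriv ?_
    simp only [Pi.add_apply]
    field_simp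
    linear_combination (-(ω : ℂ) ^ 2 * g ξ) * hI
  have hG' : IntegrableOn (fun ξ : ℝ => Complex.exp (Complex.I * ω * ξ) * g ξ +
      Complex.exp (Complex.I * ω * ξ) * g₂ ξ / (ω : ℂ) ^ 2) (Ioi 0) :=
    (hmul hi).add ((hmul hi₂).div_const _)
  have hGi : IntegrableOn G (Ioi 0) :=
    hmul (((hi.div_const _).const_mul _).add (hi₁.div_const _))
  have hlim := tendsto_zero_of_hasDerivAt_of_integrableOn_Ioi hd hG' hGi
  have hcG : ContinuousWithinAt G (Ici 0) 0 :=
    (hexp 0).continuousAt.continuousWithinAt.mul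
      ((continuousWithinAt_const.mul (hc.div_const _)).add (hc₁.div_const _))
  have key := integral_Ioi_of_hasDerivAt_of_tendsto hcG hd hG' hlim
  rw [integral_add (hmul hi) ((hmul hi₂).div_const _), integral_div] at key
  have : G 0 = -Complex.I * (g 0 / ω) + g₁ 0 / (ω : ℂ) ^ 2 := by simp [hG]
  rw [this] at key
  linear_combination key

/-- The integral over `ℝ` of a Hermitian function is twice the real part of its half-line integral. -/
lemma integral_eq_add_conj {F : ℝ → ℂ} (hF : ∀ ξ, F (-ξ) = (starRingEnd ℂ) (F ξ))
    (hi : IntegrableOn F (Ioi 0)) :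
    ∫ ξ, F ξ = (starRingEnd ℂ) (∫ ξ in Ioi 0, F ξ) + ∫ ξ in Ioi 0, F ξ := by
  have hneg : IntegrableOn F (Iic 0) := by
    rw [integrableOn_Iic_iff_integrableOn_Iio,
      ← (Measure.measurePreserving_neg (volume : Measure ℝ)).integrableOn_comp_preimage
      (Homeomorph.neg ℝ).measurableEmbedding]
    simp only [Function.comp_def, neg_preimage, neg_Iio, neg_zero, hF]
    exact (Complex.conjLIE.toContinuousLinearEquiv.toContinuousLinearMap.integrable_comp hi)
  rw [← intervalIntegral.integral_Iic_add_Ioi hneg hi]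
  congr 1
  rw [← neg_zero, ← integral_comp_neg_Ioi, neg_zero]
  simp only [hF]
  exact integral_conj

/-- Quadratic decay of the Fourier integral of a Hermitian function `F` that is twice differentiable
on the open half-line and `C¹` up to `0`: since `g 0 = 1` is real, the boundary term of order `1 / x` drops out,
and a jump of the derivative at `0` costs only a term of order `1 / x²`. -/
lemma norm_fourier_le {F g g₁ g₂ : ℝ → ℂ} 
    (hF : ∀ ξ, F (-ξ) = (starRingEnd ℂ) (F ξ)) (hFg : ∀ ξ ∈ Ioi (0 : ℝ), F ξ = g ξ)
    (hg : ∀ ξ ∈ Ioi (0 : ℝ), HasDerivAt g (g₁ ξ) ξ)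
    (hg₁ : ∀ ξ ∈ Ioi (0 : ℝ), HasDerivAt g₁ (g₂ ξ) ξ)
    (hc : ContinuousWithinAt g (Ici 0) 0) (hc₁ : ContinuousWithinAt g₁ (Ici 0) 0)
    (h0 : g 0 = 1)
    (hi : IntegrableOn g (Ioi 0)) (hi₁ : IntegrableOn g₁ (Ioi 0)) (hi₂ : IntegrableOn g₂ (Ioi 0))
    (x : ℝ) :
    ‖∫ ξ : ℝ, Complex.exp (2 * π * Complex.I * x * ξ) * F ξ‖ ≤
      2 * ((∫ ξ in Ioi 0, ‖g ξ‖) + (‖g₁ 0‖ + ∫ ξ in Ioi 0, ‖g₂ ξ‖)) * (1 + x ^ 2)⁻¹ := by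
  set ω : ℝ := 2 * π * x with hω
  have hE : ∀ ξ : ℝ, Complex.exp (2 * π * Complex.I * x * ξ) = Complex.exp (Complex.I * ω * ξ) :=
    fun ξ => by rw [hω]; push_cast; ring_nf
  simp only [hE]
  have hnorm : ∀ ξ : ℝ, ‖Complex.exp (Complex.I * ω * ξ)‖ = 1 := fun ξ => by
    rw [Complex.norm_exp]; simp
  have hcongr : EqOn (fun ξ : ℝ => Complex.exp (Complex.I * ω * ξ) * F ξ)
      (fun ξ : ℝ => Complex.exp (Complex.I * ω * ξ) * g ξ) (Ioi 0) := fun ξ hξ => by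
    simp only [hFg ξ hξ]
  have hig : IntegrableOn (fun ξ : ℝ => Complex.exp (Complex.I * ω * ξ) * g ξ) (Ioi 0) :=
    hi.bdd_mul (c := 1) (by fun_prop) (Eventually.of_forall fun ξ => (hnorm ξ).le)
  have hsplit := integral_eq_add_conj (F := fun ξ : ℝ => Complex.exp (Complex.I * ω * ξ) * F ξ)
    (fun ξ => by simp [hF, ← Complex.exp_conj]) (hig.congr_fun hcongr.symm measurableSet_Ioi)
  rw [setIntegral_congr_fun measurableSet_Ioi hcongr] at hsplit
  have hle : ∀ h : ℝ → ℂ, ‖∫ ξ in Ioi (0 : ℝ), Complex.exp (Complex.I * ω * ξ) * h ξ‖ ≤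
      ∫ ξ in Ioi 0, ‖h ξ‖ := fun h => by
    refine (norm_integral_le_integral_norm _).trans_eq ?_
    simp only [norm_mul, hnorm, one_mul]
  have b1 : ‖∫ ξ : ℝ, Complex.exp (Complex.I * ω * ξ) * F ξ‖ ≤ 2 * ∫ ξ in Ioi 0, ‖g ξ‖ := by
    rw [hsplit]
    refine (norm_add_le _ _).trans ?_
    rw [RCLike.norm_conj]
    linarith [hle g]
  have b2 : x ^ 2 * ‖∫ ξ : ℝ, Complex.exp (Complex.I * ω * ξ) * F ξ‖ ≤
      2 * (‖g₁ 0‖ + ∫ ξ in Ioi 0, ‖g₂ ξ‖) := by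
    have hnn : 0 ≤ ∫ ξ in Ioi 0, ‖g₂ ξ‖ := integral_nonneg fun _ => norm_nonneg _
    rcases eq_or_ne x 0 with rfl | hx
    · simp only [ne_eq, OfNat.ofNat_ne_zero, not_false_eq_true, zero_pow, zero_mul]; positivity
    have hω0 : ω ≠ 0 := by rw [hω]; exact mul_ne_zero (by positivity) hx
    rw [hsplit, fourier_half_line hg hg₁ hc hc₁ hi hi₁ hi₂ hω0, h0]
    set J := g₁ 0 + ∫ ξ in Ioi (0 : ℝ), Complex.exp (Complex.I * ω * ξ) * g₂ ξ with hJ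
    have hJn : ‖J‖ ≤ ‖g₁ 0‖ + ∫ ξ in Ioi 0, ‖g₂ ξ‖ :=
      (norm_add_le _ _).trans (by linarith [hle g₂])
    -- The purely imaginary boundary term cancels against its conjugate.
    have e : (starRingEnd ℂ) (Complex.I * (1 / ω) - J / (ω : ℂ) ^ 2) +
        (Complex.I * (1 / ω) - J / (ω : ℂ) ^ 2) = -(((starRingEnd ℂ) J + J) / (ω : ℂ) ^ 2) := by
      simp only [map_sub, map_mul, map_div₀, map_pow, Complex.conj_I, Complex.conj_ofReal, map_one]
      ring
    have e2 : ‖(starRingEnd ℂ) J + J‖ ≤ 2 * ‖J‖ := by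
      refine (norm_add_le _ _).trans ?_
      rw [RCLike.norm_conj]; linarith
    have hx2 : x ^ 2 ≤ ω ^ 2 := by
      rw [hω, mul_pow]
      have : 1 ≤ (2 * π) ^ 2 := by nlinarith [pi_gt_three]
      nlinarith [sq_nonneg x]
    have hω2 : 0 < ω ^ 2 := by positivity
    rw [e, norm_neg, norm_div, norm_pow, Complex.norm_real, norm_eq_abs, sq_abs]
    calc x ^ 2 * (‖(starRingEnd ℂ) J + J‖ / ω ^ 2)
        ≤ ω ^ 2 * (‖(starRingEnd ℂ) J + J‖ / ω ^ 2) := by gcongr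
      _ = ‖(starRingEnd ℂ) J + J‖ := mul_div_cancel₀ _ hω2.ne'
      _ ≤ _ := by linarith
  rw [← div_eq_mul_inv, le_div_iff₀ (by positivity)]
  linarith

/-- Tameness transfers to complex-valued functions dominated by the weighted amplitude. -/
lemma Tame.bound {α β η : ℝ} {h : ℝ → ℝ → ℝ} (hh : Tame α β η h) :
    ∃ C : ℝ, 0 ≤ C ∧ ∀ t : ℝ, 0 < t → ∀ u : ℝ → ℂ, Measurable u →
      (∀ ξ : ℝ, 0 < ξ → ‖u ξ‖ ≤ h t ξ * exp (-(ξ ^ α - ξ ^ β) * t)) →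
      IntegrableOn u (Ioi 0) ∧ ∫ ξ in Ioi 0, ‖u ξ‖ ≤ C * (exp (η * t) / t ^ (1 / α)) := by
  obtain ⟨C, hC, H⟩ := hh
  refine ⟨C, hC, fun t ht u hu hle => ?_⟩
  obtain ⟨h1, h2⟩ := H t ht
  have hi : IntegrableOn u (Ioi 0) := by
    refine h1.mono' hu.aestronglyMeasurable ?_
    filter_upwards [ae_restrict_mem measurableSet_Ioi] with ξ hξ using hle ξ hξ
  exact ⟨hi, (setIntegral_mono_on hi.norm h1 measurableSet_Ioi hle).trans h2⟩

/-! ### The kernel estimate -/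

/-- The exponent `f` on the half-line `ξ > 0`, with dispersive part `m(ξ) ξ = c ξ ^ k`. -/
noncomputable def phase (c k α β ξ : ℝ) : ℂ :=
  Complex.I * ((c * ξ ^ k : ℝ) : ℂ) + ((ξ ^ α - ξ ^ β : ℝ) : ℂ)

/-- The derivative of `phase` on `ξ > 0`. For `β = 1` the convention `0 ^ 0 = 1` makes it continuous
up to `ξ = 0`. -/
noncomputable def phase₁ (c k α β ξ : ℝ) : ℂ :=
  Complex.I * ((c * (k * ξ ^ (k - 1)) : ℝ) : ℂ) +
    ((α * ξ ^ (α - 1) - β * ξ ^ (β - 1) : ℝ) : ℂ)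

/-- The second derivative of `phase` on `ξ > 0`. -/
noncomputable def phase₂ (c k α β ξ : ℝ) : ℂ :=
  Complex.I * ((c * (k * ((k - 1) * ξ ^ (k - 1 - 1))) : ℝ) : ℂ) +
    ((α * ((α - 1) * ξ ^ (α - 1 - 1)) - β * ((β - 1) * ξ ^ (β - 1 - 1)) : ℝ) : ℂ)

lemma hasDerivAt_phase (c k α β : ℝ) {ξ : ℝ} (hξ : 0 < ξ) :
    HasDerivAt (phase c k α β) (phase₁ c k α β ξ) ξ := by
  have h : ∀ s : ℝ, HasDerivAt (fun ξ : ℝ => ξ ^ s) (s * ξ ^ (s - 1)) ξ := fun s =>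
    hasDerivAt_rpow_const (Or.inl hξ.ne')
  exact (((h k).const_mul c).ofReal_comp.const_mul Complex.I).add ((h α).sub (h β)).ofReal_comp

lemma hasDerivAt_phase₁ (c k α β : ℝ) {ξ : ℝ} (hξ : 0 < ξ) :
    HasDerivAt (phase₁ c k α β) (phase₂ c k α β ξ) ξ := by
  have h : ∀ s : ℝ, HasDerivAt (fun ξ : ℝ => s * ξ ^ (s - 1)) (s * ((s - 1) * ξ ^ (s - 1 - 1))) ξ :=
    fun s => (hasDerivAt_rpow_const (Or.inl hξ.ne')).const_mul s
  exact (((h k).const_mul c).ofReal_comp.const_mul Complex.I).add ((h α).sub (h β)).ofReal_comp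

lemma norm_I_mul_add_le (a b : ℝ) : ‖Complex.I * (a : ℂ) + (b : ℂ)‖ ≤ |a| + |b| := by
  refine (norm_add_le _ _).trans ?_
  simp

/-- The pointwise kernel estimate, for any Hermitian extension `F` of the half-line multiplier; only
`|c| = 1` and `2 ≤ k ≤ 3` matter for the dispersive term. -/
theorem kernel_pointwise_bound {α β c k : ℝ} (hβ : 1 ≤ β) (hαβ : β < α) (hα : 2 < α)
    (hc : |c| = 1) (hk : 2 ≤ k) (hk' : k ≤ 3) :
    ∃ C ≥ 0, ∃ η > 0, ∀ t : ℝ, 0 < t → ∀ F : ℝ → ℂ,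
      (∀ ξ, F (-ξ) = (starRingEnd ℂ) (F ξ)) →
      (∀ ξ ∈ Ioi (0 : ℝ), F ξ = Complex.exp (-phase c k α β ξ * t)) → ∀ x : ℝ,
      ‖∫ ξ : ℝ, Complex.exp (2 * π * Complex.I * x * ξ) * F ξ‖ ≤
        C * (exp (η * t) / t ^ (1 / α)) * (1 + x ^ 2)⁻¹ := by
  have hα0 : 0 < α := by linarith
  obtain ⟨M, hM0, hM⟩ := exists_rpow_le_half (by linarith : 0 ≤ β) hαβ
  have mon : ∀ (a : ℕ) (s : ℝ), -1 < s → s ≤ a * α →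
      Tame α β (M + 1) (fun t ξ => t ^ a * ξ ^ s) := fun a s => Tame.monomial hα0 hM
  have T0 : Tame α β (M + 1) (fun _ _ => 1) := by
    simpa using mon 0 0 (by norm_num) (by simp)
  have T1 : Tame α β (M + 1) (fun t ξ =>
      k * (t ^ 1 * ξ ^ (k - 1)) + α * (t ^ 1 * ξ ^ (α - 1)) + β * (t ^ 1 * ξ ^ (β - 1))) :=
    (((mon 1 (k - 1) (by linarith) (by push_cast; linarith)).const_mul (by linarith)).add
      ((mon 1 (α - 1) (by linarith) (by push_cast; linarith)).const_mul (by linarith))).add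
      ((mon 1 (β - 1) (by linarith) (by push_cast; linarith)).const_mul (by linarith))
  -- For `β = 1` the monomial `ξ ^ (β - 2)` is not integrable, but its coefficient vanishes.
  have Tβ : Tame α β (M + 1) (fun t ξ => β * (β - 1) * (t ^ 1 * ξ ^ (β - 1 - 1))) := by
    rcases hβ.eq_or_lt with rfl | hβ1
    · simpa using T0.const_mul le_rfl
    · exact (mon 1 (β - 1 - 1) (by linarith) (by push_cast; linarith)).const_mul
        (mul_nonneg (by linarith) (by linarith))
  have Tsq : ∀ s : ℝ, 0 ≤ s → s ≤ α → Tame α β (M + 1) (fun t ξ => t ^ 2 * ξ ^ (2 * s)) :=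
    fun s h0 h1 => mon 2 (2 * s) (by linarith) (by push_cast; linarith)
  have T2 : Tame α β (M + 1) (fun t ξ =>
      (k * (k - 1) * (t ^ 1 * ξ ^ (k - 1 - 1)) + α * (α - 1) * (t ^ 1 * ξ ^ (α - 1 - 1)) +
        β * (β - 1) * (t ^ 1 * ξ ^ (β - 1 - 1))) +
      (3 * k ^ 2 * (t ^ 2 * ξ ^ (2 * (k - 1))) + 3 * α ^ 2 * (t ^ 2 * ξ ^ (2 * (α - 1))) +
        3 * β ^ 2 * (t ^ 2 * ξ ^ (2 * (β - 1))))) :=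
    ((((mon 1 (k - 1 - 1) (by linarith) (by push_cast; linarith)).const_mul
        (mul_nonneg (by linarith) (by linarith))).add
      ((mon 1 (α - 1 - 1) (by linarith) (by push_cast; linarith)).const_mul
        (mul_nonneg (by linarith) (by linarith)))).add Tβ).add
    ((((Tsq (k - 1) (by linarith) (by linarith)).const_mul (by positivity)).add
      ((Tsq (α - 1) (by linarith) (by linarith)).const_mul (by positivity))).add
      ((Tsq (β - 1) (by linarith) (by linarith)).const_mul (by positivity)))
  obtain ⟨C₀, hC₀, B₀⟩ := T0.bound
  obtain ⟨C₁, hC₁, B₁⟩ := T1.bound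
  obtain ⟨C₂, hC₂, B₂⟩ := T2.bound
  set D : ℝ := (1 + 1 / α) ^ (1 + 1 / α) with hD
  have hD0 : 0 ≤ D := by positivity
  refine ⟨2 * (C₀ + (β * D + C₂)), by positivity, M + 1, by linarith, fun t ht F hF hFg x => ?_⟩
  set E : ℝ := exp ((M + 1) * t) / t ^ (1 / α) with hE
  set g : ℝ → ℂ := fun ξ => Complex.exp (-phase c k α β ξ * t) with hgdef
  set g₁ : ℝ → ℂ := fun ξ => -phase₁ c k α β ξ * t * g ξ with hg₁def
  set g₂ : ℝ → ℂ := fun ξ =>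
    (-phase₂ c k α β ξ * t + (phase₁ c k α β ξ * t) ^ 2) * g ξ with hg₂def
  have hgn : ∀ ξ, ‖g ξ‖ = exp (-(ξ ^ α - ξ ^ β) * t) := fun ξ => by
    rw [hgdef, Complex.norm_exp]
    congr 1
    simp [phase, -Complex.ofReal_sub, -Complex.ofReal_mul]
  have hgm : Measurable g := by unfold g phase; fun_prop
  have hgm₁ : Measurable g₁ := by unfold g₁ phase₁; fun_prop
  have hgm₂ : Measurable g₂ := by unfold g₂ phase₁ phase₂; fun_prop
  have hp₁ : ∀ ξ : ℝ, 0 ≤ ξ → ‖phase₁ c k α β ξ‖ ≤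
      k * ξ ^ (k - 1) + α * ξ ^ (α - 1) + β * ξ ^ (β - 1) := fun ξ hξ => by
    refine (norm_I_mul_add_le _ _).trans ?_
    rw [abs_mul, hc, one_mul, abs_of_nonneg (by positivity), add_assoc]
    gcongr
    refine (abs_sub _ _).trans ?_
    rw [abs_of_nonneg (by positivity), abs_of_nonneg (by positivity)]
  have hp₂ : ∀ ξ : ℝ, 0 ≤ ξ → ‖phase₂ c k α β ξ‖ ≤ k * (k - 1) * ξ ^ (k - 1 - 1) +
      α * (α - 1) * ξ ^ (α - 1 - 1) + β * (β - 1) * ξ ^ (β - 1 - 1) := fun ξ hξ => by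
    have hn : ∀ s : ℝ, 1 ≤ s → 0 ≤ s * ((s - 1) * ξ ^ (s - 1 - 1)) := fun s hs =>
      mul_nonneg (by linarith) (mul_nonneg (by linarith) (by positivity))
    refine (norm_I_mul_add_le _ _).trans ?_
    rw [abs_mul, hc, one_mul, abs_of_nonneg (hn k (by linarith)), add_assoc, mul_assoc k]
    gcongr
    refine (abs_sub _ _).trans ?_
    rw [abs_of_nonneg (hn α (by linarith)), abs_of_nonneg (hn β hβ), mul_assoc, mul_assoc]
  obtain ⟨hi, hI⟩ := B₀ t ht g hgm fun ξ _ => by rw [hgn, one_mul]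
  obtain ⟨hi₁, -⟩ := B₁ t ht g₁ hgm₁ fun ξ hξ => by
    rw [hg₁def, norm_mul, hgn, norm_mul, norm_neg, Complex.norm_real, norm_of_nonneg ht.le]
    gcongr
    calc _ ≤ (k * ξ ^ (k - 1) + α * ξ ^ (α - 1) + β * ξ ^ (β - 1)) * t := by
          gcongr; exact hp₁ ξ hξ.le
      _ = _ := by ring
  obtain ⟨hi₂, hI₂⟩ := B₂ t ht g₂ hgm₂ fun ξ hξ => by
    rw [hg₂def, norm_mul, hgn]
    gcongr
    refine (norm_add_le _ _).trans (add_le_add ?_ ?_)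
    · rw [norm_mul, norm_neg, Complex.norm_real, norm_of_nonneg ht.le]
      calc _ ≤ (k * (k - 1) * ξ ^ (k - 1 - 1) + α * (α - 1) * ξ ^ (α - 1 - 1) +
              β * (β - 1) * ξ ^ (β - 1 - 1)) * t := by
            gcongr; exact hp₂ ξ hξ.le
        _ = _ := by ring
    · rw [norm_pow, norm_mul, Complex.norm_real, norm_of_nonneg ht.le]
      have hsq : ∀ s : ℝ, ξ ^ (2 * s) = (ξ ^ s) ^ 2 := fun s => by
        rw [mul_comm, rpow_mul hξ.le, rpow_two]
      have h3 : ∀ a b d : ℝ, (a + b + d) ^ 2 ≤ 3 * a ^ 2 + 3 * b ^ 2 + 3 * d ^ 2 := fun a b d => by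
        nlinarith [sq_nonneg (a - b), sq_nonneg (a - d), sq_nonneg (b - d)]
      calc _ ≤ ((k * ξ ^ (k - 1) + α * ξ ^ (α - 1) + β * ξ ^ (β - 1)) * t) ^ 2 := by
            gcongr; exact hp₁ ξ hξ.le
        _ = (k * ξ ^ (k - 1) + α * ξ ^ (α - 1) + β * ξ ^ (β - 1)) ^ 2 * t ^ 2 := by ring
        _ ≤ _ := mul_le_mul_of_nonneg_right (h3 _ _ _) (by positivity)
        _ = _ := by rw [hsq, hsq, hsq]; ring
  have hdg : ∀ ξ ∈ Ioi (0 : ℝ), HasDerivAt g (g₁ ξ) ξ := fun ξ hξ => by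
    refine (((hasDerivAt_phase c k α β hξ).neg.mul_const (t : ℂ)).cexp).congr_deriv ?_
    simp only [hg₁def, hgdef, Pi.neg_apply]
    ring
  have hdg₁ : ∀ ξ ∈ Ioi (0 : ℝ), HasDerivAt g₁ (g₂ ξ) ξ := fun ξ hξ => by
    refine ((((hasDerivAt_phase₁ c k α β hξ).neg.mul_const (t : ℂ))).mul (hdg ξ hξ)).congr_deriv ?_
    simp only [hg₁def, hg₂def, Pi.neg_apply]
    ring
  have hcont : ∀ s : ℝ, 0 ≤ s → Continuous fun ξ : ℝ => ξ ^ s := fun s hs =>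
    continuous_rpow_const hs
  have hgc : Continuous g := by
    have h1 := hcont k (by linarith)
    have h2 := hcont α (by linarith)
    have h3 := hcont β (by linarith)
    unfold g phase; fun_prop
  have hgc₁ : Continuous g₁ := by
    have h1 := hcont (k - 1) (by linarith)
    have h2 := hcont (α - 1) (by linarith)
    have h3 := hcont (β - 1) (by linarith)
    unfold g₁ phase₁; fun_prop
  have h0 : g 0 = 1 := by
    simp [hgdef, phase, zero_rpow (by linarith : k ≠ 0), zero_rpow hα0.ne',
      zero_rpow (by linarith : β ≠ 0)]
  have h01 : ‖g₁ 0‖ ≤ β * D * E := by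
    have hβ0 : (0 : ℝ) ^ (β - 1) ≤ 1 := by
      rcases hβ.eq_or_lt with rfl | h
      · simp
      · rw [zero_rpow (by linarith)]; norm_num
    have hp0 := hp₁ 0 le_rfl
    rw [zero_rpow (by linarith : k - 1 ≠ 0), zero_rpow (by linarith : α - 1 ≠ 0)] at hp0
    have hp0' : ‖phase₁ c k α β 0‖ ≤ β := by nlinarith
    have htE : t ≤ D * E := by
      have h1 := rpow_le_mul_exp (r := 1 + 1 / α) (by positivity) ht
      rw [rpow_add ht, rpow_one, ← le_div_iff₀ (by positivity), mul_div_assoc] at h1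
      refine h1.trans ?_
      rw [hE]
      gcongr
      nlinarith
    rw [hg₁def]
    simp only [h0, mul_one, norm_mul, norm_neg, Complex.norm_real, norm_of_nonneg ht.le]
    calc _ ≤ β * (D * E) := by gcongr
      _ = _ := by ring
  refine (norm_fourier_le hF hFg hdg hdg₁ hgc.continuousWithinAt hgc₁.continuousWithinAt h0
    hi hi₁ hi₂ x).trans ?_
  have hsum : 2 * ((∫ ξ in Ioi 0, ‖g ξ‖) + (‖g₁ 0‖ + ∫ ξ in Ioi 0, ‖g₂ ξ‖)) ≤
      2 * (C₀ + (β * D + C₂)) * E := by linarith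
  exact mul_le_mul_of_nonneg_right hsum (by positivity)

/-- Proposition «Prop-Kernel-4»: for `α > β ≥ 1` with `α > 2`, dispersion symbol
`m(ξ) = |ξ|` or `m(ξ) = −|ξ|²`, and any `1 ≤ p ≤ ∞`, there are `C, η₁ > 0` such that for
all `t > 0` the kernel `K_{α,β}(t,·)` satisfies `‖K_{α,β}(t,·)‖_{L^p} ≤ C e^{η₁ t}/t^{1/α}`. -/
theorem kernel_Lp_bound
    (α β : ℝ) (hβ : 1 ≤ β) (hαβ : β < α) (hα : 2 < α)
    (m : ℝ → ℝ) (hm : (∀ ξ, m ξ = |ξ|) ∨ (∀ ξ, m ξ = -|ξ| ^ 2))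
    (p : ℝ≥0∞) (hp : 1 ≤ p) :
    ∃ C > 0, ∃ η₁ > 0, ∀ t : ℝ, 0 < t →
      eLpNorm (fun x : ℝ =>
          ∫ ξ : ℝ, Complex.exp (2 * Real.pi * Complex.I * (x : ℂ) * (ξ : ℂ)) *
            Complex.exp (-(Complex.I * ((m ξ : ℝ) : ℂ) * (ξ : ℂ) +
              ((|ξ| ^ α - |ξ| ^ β : ℝ) : ℂ)) * (t : ℂ))) p volume ≤
        ENNReal.ofReal (C * Real.exp (η₁ * t) / t ^ (1 / α)) := by
  have heven : ∀ ξ, m (-ξ) = m ξ := fun ξ => by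
    rcases hm with h | h <;> simp [h]
  obtain ⟨c, k, hc, hk, hk', hmk⟩ : ∃ c k : ℝ, |c| = 1 ∧ 2 ≤ k ∧ k ≤ 3 ∧
      ∀ ξ : ℝ, 0 < ξ → m ξ * ξ = c * ξ ^ k := by
    rcases hm with h | h
    · refine ⟨1, 2, by simp, le_rfl, by norm_num, fun ξ hξ => ?_⟩
      rw [h, abs_of_pos hξ, rpow_two]; ring
    · refine ⟨-1, 3, by simp, by norm_num, le_rfl, fun ξ hξ => ?_⟩
      have : ξ ^ (3 : ℝ) = ξ ^ 3 := by exact_mod_cast rpow_natCast ξ 3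
      rw [h, abs_of_pos hξ, this]; ring
  obtain ⟨C, hC, η, hη, H⟩ := kernel_pointwise_bound hβ hαβ hα hc hk hk'
  have hw := memLp_inv_one_add_sq hp
  set W : ℝ := (eLpNorm (fun x : ℝ => (1 + x ^ 2)⁻¹) p volume).toReal with hW
  have hW0 : 0 ≤ W := ENNReal.toReal_nonneg
  -- The summand `1` only serves to make the constant positive.
  refine ⟨C * W + 1, by positivity, η, hη, fun t ht => ?_⟩
  have hA : 0 ≤ C * (exp (η * t) / t ^ (1 / α)) := by positivity
  refine (eLpNorm_mono_real (H t ht _ (fun ξ => ?_) (fun ξ hξ => ?_))).trans ?_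
  · rw [← Complex.exp_conj]
    simp only [heven, abs_neg, map_mul, map_neg, map_add, Complex.conj_I, Complex.conj_ofReal,
      Complex.ofReal_neg]
    ring_nf
  · have hξ' : 0 < ξ := hξ
    rw [phase, ← hmk ξ hξ', abs_of_pos hξ']
    push_cast
    ring_nf
  · have := eLpNorm_const_smul (C * (exp (η * t) / t ^ (1 / α)))
      (fun x : ℝ => (1 + x ^ 2)⁻¹) p volume
    calc _ = _ := this
      _ = ENNReal.ofReal (C * (exp (η * t) / t ^ (1 / α))) * ENNReal.ofReal W := by
          rw [hW, ENNReal.ofReal_toReal hw.2.ne, Real.enorm_of_nonneg hA]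
      _ = ENNReal.ofReal (C * (exp (η * t) / t ^ (1 / α)) * W) := (ENNReal.ofReal_mul hA).symm
      _ ≤ _ := by
          apply ENNReal.ofReal_le_ofReal
          have : 0 ≤ exp (η * t) / t ^ (1 / α) := by positivity
          rw [mul_div_assoc]
          nlinarith
end

section
/- Let u : ℝ → ℝ be a Schwartz function and let γ₁, γ₂, γ₃ ∈ ℝ. Then ∫_ℝ ( γ₁·(u²)′(x) + γ₂·(u²)″(x) + γ₃·(u′(x))² ) · u(x) dx = (γ₃ − 2γ₂) · ∫_ℝ (u′(x))² · u(x) dx. In particular, when γ₃ = 2γ₂ the nonlinear term γ₁∂ₓ(u²) + γ₂∂ₓ²(u²) + γ₃(∂ₓu)² contributes nothing to the L² energy balance. -/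
/-!
Both `u²` and `u'` are Schwartz functions, so every product of them is integrable and integration
by parts has no boundary terms. It gives `∫ (u²)' u = -∫ u² u'`, and since `(u²)' = 2 u u'` the
left side is `2 ∫ u² u'`; hence both vanish. It also gives
`∫ (u²)'' u = -∫ (u²)' u' = -2 ∫ (u')² u`. Linearity of the integral combines the three terms.
-/

open Real MeasureTheory

/-- The pointwise product of two real Schwartz functions, as a Schwartz function. -/
noncomputable def schwartzMul (f g : SchwartzMap ℝ ℝ) : SchwartzMap ℝ ℝ :=
  SchwartzMap.pairing (ContinuousLinearMap.mul ℝ ℝ) f g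

lemma schwartzMul_apply (f g : SchwartzMap ℝ ℝ) (x : ℝ) : schwartzMul f g x = f x * g x := rfl

lemma integrable_schwartz_mul (f g : SchwartzMap ℝ ℝ) :
    Integrable (fun x : ℝ => f x * g x) :=
  (schwartzMul f g).integrable

lemma deriv_schwartz_sq (u : SchwartzMap ℝ ℝ) (x : ℝ) :
    deriv (fun y : ℝ => u y ^ 2) x = 2 * u x * deriv u x := by
  simpa using ((u.hasDerivAt x).fun_pow 2).deriv

lemma integral_deriv_sq_mul_self (u : SchwartzMap ℝ ℝ) :
    ∫ x : ℝ, deriv (fun y : ℝ => u y ^ 2) x * u x = 0 := by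
  have hv : (schwartzMul u u : ℝ → ℝ) = fun y : ℝ => u y ^ 2 := by
    funext y
    rw [schwartzMul_apply, sq]
  have h := SchwartzMap.integral_mul_deriv_eq_neg_deriv_mul (schwartzMul u u) u
  rw [hv] at h
  -- The two sides of the integration by parts are `∫ u² u'` and `-2 ∫ u² u'`.
  have h2 : ∫ x : ℝ, deriv (fun y : ℝ => u y ^ 2) x * u x
      = 2 * ∫ x : ℝ, u x ^ 2 * deriv u x := by
    rw [← integral_const_mul]
    congr 1
    funext x
    rw [deriv_schwartz_sq]
    ring
  linarith

lemma integral_deriv_deriv_sq_mul_self (u : SchwartzMap ℝ ℝ) :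
    ∫ x : ℝ, deriv (deriv (fun y : ℝ => u y ^ 2)) x * u x
      = -2 * ∫ x : ℝ, deriv u x ^ 2 * u x := by
  have hv : (SchwartzMap.derivCLM ℝ ℝ (schwartzMul u u) : ℝ → ℝ)
      = deriv (fun y : ℝ => u y ^ 2) := by
    funext y
    rw [SchwartzMap.derivCLM_apply]
    congr 1
    funext z
    rw [schwartzMul_apply, sq]
  have h := SchwartzMap.integral_mul_deriv_eq_neg_deriv_mul
    (SchwartzMap.derivCLM ℝ ℝ (schwartzMul u u)) u
  rw [hv] at h
  have h2 : ∫ x : ℝ, deriv (fun y : ℝ => u y ^ 2) x * deriv u x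
      = 2 * ∫ x : ℝ, deriv u x ^ 2 * u x := by
    rw [← integral_const_mul]
    congr 1
    funext x
    rw [deriv_schwartz_sq]
    ring
  linarith

theorem nonlinear_energy_cancellation
    (u : SchwartzMap ℝ ℝ) (γ₁ γ₂ γ₃ : ℝ) :
    (∫ x : ℝ, (γ₁ * deriv (fun y : ℝ => u y ^ 2) x +
        γ₂ * deriv (deriv (fun y : ℝ => u y ^ 2)) x +
        γ₃ * (deriv (fun y : ℝ => u y) x) ^ 2) * u x) =
      (γ₃ - 2 * γ₂) * ∫ x : ℝ, (deriv (fun y : ℝ => u y) x) ^ 2 * u x ∧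
    (γ₃ = 2 * γ₂ →
      (∫ x : ℝ, (γ₁ * deriv (fun y : ℝ => u y ^ 2) x +
          γ₂ * deriv (deriv (fun y : ℝ => u y ^ 2)) x +
          γ₃ * (deriv (fun y : ℝ => u y) x) ^ 2) * u x) = 0) := by
  have hv : (fun y : ℝ => u y ^ 2) = schwartzMul u u := by
    funext y
    rw [schwartzMul_apply, sq]
  have hv' : deriv (fun y : ℝ => u y ^ 2) = SchwartzMap.derivCLM ℝ ℝ (schwartzMul u u) := by
    funext y
    rw [hv, SchwartzMap.derivCLM_apply]
  have hv'' : deriv (deriv (fun y : ℝ => u y ^ 2))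
      = SchwartzMap.derivCLM ℝ ℝ (SchwartzMap.derivCLM ℝ ℝ (schwartzMul u u)) := by
    funext y
    rw [hv', SchwartzMap.derivCLM_apply]
  have i₁ : Integrable (fun x : ℝ => deriv (fun y : ℝ => u y ^ 2) x * u x) := by
    rw [hv']
    exact integrable_schwartz_mul _ _
  have i₂ : Integrable (fun x : ℝ => deriv (deriv (fun y : ℝ => u y ^ 2)) x * u x) := by
    rw [hv'']
    exact integrable_schwartz_mul _ _
  have i₃ : Integrable (fun x : ℝ => deriv u x ^ 2 * u x) := by
    have h := integrable_schwartz_mul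
      (schwartzMul (SchwartzMap.derivCLM ℝ ℝ u) (SchwartzMap.derivCLM ℝ ℝ u)) u
    simpa only [schwartzMul_apply, SchwartzMap.derivCLM_apply, ← sq] using h
  have key : (∫ x : ℝ, (γ₁ * deriv (fun y : ℝ => u y ^ 2) x +
        γ₂ * deriv (deriv (fun y : ℝ => u y ^ 2)) x +
        γ₃ * (deriv (fun y : ℝ => u y) x) ^ 2) * u x) =
      (γ₃ - 2 * γ₂) * ∫ x : ℝ, (deriv (fun y : ℝ => u y) x) ^ 2 * u x := by
    calc _ = ∫ x : ℝ, (γ₁ * (deriv (fun y : ℝ => u y ^ 2) x * u x) +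
          γ₂ * (deriv (deriv (fun y : ℝ => u y ^ 2)) x * u x)) +
          γ₃ * (deriv u x ^ 2 * u x) := by
          congr 1
          funext x
          ring
      _ = γ₁ * (∫ x : ℝ, deriv (fun y : ℝ => u y ^ 2) x * u x) +
          γ₂ * (∫ x : ℝ, deriv (deriv (fun y : ℝ => u y ^ 2)) x * u x) +
          γ₃ * ∫ x : ℝ, deriv u x ^ 2 * u x := by
          have i₁₂ : Integrable (fun x : ℝ => γ₁ * (deriv (fun y : ℝ => u y ^ 2) x * u x) +
              γ₂ * (deriv (deriv (fun y : ℝ => u y ^ 2)) x * u x)) :=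
            (i₁.const_mul γ₁).add (i₂.const_mul γ₂)
          rw [integral_add i₁₂ (i₃.const_mul γ₃),
            integral_add (i₁.const_mul γ₁) (i₂.const_mul γ₂), integral_const_mul,
            integral_const_mul, integral_const_mul]
      _ = _ := by
          rw [integral_deriv_sq_mul_self, integral_deriv_deriv_sq_mul_self]
          ring
  refine ⟨key, fun h => ?_⟩
  rw [key, h, sub_self, zero_mul]
end
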